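/- Let G = K_n be the complete graph on n vertices and let T_s be a star spanning tree of G. Then ∩(T_s) ≤ ∩(T) for every spanning tree T of G; that is, star spanning trees minimize the tree intersection number among all spanning trees of the complete graph. -/

import Mathlib

open SimpleGraph

/-- The set of edges lying on some path (in a tree: the unique path) between `x` and `y`
in the graph `T`. -/
def pathEdges {V : Type*} (T : SimpleGraph V) (x y : V) : Set (Sym2 V) :=
  {f | ∃ p : T.Walk x y, p.IsPath ∧ f ∈ p.edges}

/-- The edge set of the tree-cycle induced (in the spanning tree `T`) by the cycle-edge `e`:
the edge `e` itself together with the edges of the (unique) path in `T` between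
the endpoints of `e`. -/
def cycEdges {V : Type*} (T : SimpleGraph V) (e : Sym2 V) : Set (Sym2 V) :=
  insert e {f | ∃ x y, e = s(x, y) ∧ f ∈ pathEdges T x y}

/-- The vertex set of the tree-cycle induced (in the spanning tree `T`) by the
cycle-edge `e`. -/
def cycVerts {V : Type*} (T : SimpleGraph V) (e : Sym2 V) : Set V :=
  {v | ∃ x y, e = s(x, y) ∧ ∃ p : T.Walk x y, p.IsPath ∧ v ∈ p.support}

/-- Two tree-cycles (induced by the cycle-edges `e` and `f`) have non-empty intersection:
some edge of `T` belongs to both of them. -/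
def cyclesIntersect {V : Type*} (T : SimpleGraph V) (e f : Sym2 V) : Prop :=
  (cycEdges T e ∩ cycEdges T f ∩ T.edgeSet).Nonempty

/-- The cycle intersection number `∩_T(c)` of the tree-cycle `c` induced by the
cycle-edge `e`: the number of tree-cycles distinct from `c` whose intersection with `c`
is non-empty. -/
noncomputable def cycleInterNum {V : Type*} (G T : SimpleGraph V) (e : Sym2 V) : ℕ :=
  {f | f ∈ G.edgeSet \ T.edgeSet ∧ f ≠ e ∧ cyclesIntersect T e f}.ncard

/-- The tree intersection number `∩_G(T)`: the number of unordered pairs of distinct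
tree-cycles of `T` whose intersection is non-empty. -/
noncomputable def treeInterNum {V : Type*} (G T : SimpleGraph V) : ℕ :=
  {p : Sym2 (Sym2 V) | ∃ e f : Sym2 V, p = s(e, f) ∧ e ≠ f ∧
    e ∈ G.edgeSet \ T.edgeSet ∧ f ∈ G.edgeSet \ T.edgeSet ∧ cyclesIntersect T e f}.ncard

/-- `T` is a star spanning tree of `G` with center `v`. -/
def IsStarSpanningTree {V : Type*} (G T : SimpleGraph V) (v : V) : Prop :=
  T ≤ G ∧ T.IsTree ∧ ∀ u, u ≠ v → T.Adj v u

/-- `closest-point-set(w, c)`: the set of vertices outside the tree-cycle `c` (induced by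
the cycle-edge `e`) whose closest point on `c` (with respect to distance in `T`) is `w`. -/
def closestPointSet {V : Type*} (T : SimpleGraph V) (e : Sym2 V) (w : V) : Set V :=
  {v | v ∉ cycVerts T e ∧ ∀ u ∈ cycVerts T e, T.dist v w ≤ T.dist v u}

theorem sep_intersect {V : Type*} {T : SimpleGraph V} (hT : T.IsTree) {g : Sym2 V}
    {x y u w : V}
    (h1 : ¬ (T.deleteEdges {g}).Reachable x y) (h2 : ¬ (T.deleteEdges {g}).Reachable u w) :
    cyclesIntersect T s(x, y) s(u, w) := by
  have key : ∀ {c d : V}, ¬ (T.deleteEdges {g}).Reachable c d →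
      ∃ p : T.Walk c d, p.IsPath ∧ g ∈ p.edges := by
    intro c d h
    obtain ⟨p, hp⟩ := hT.connected.exists_isPath c d
    refine ⟨p, hp, ?_⟩
    by_contra hg
    exact h ⟨p.toDeleteEdges {g} (by grind)⟩
  obtain ⟨p, hp, hgp⟩ := key h1
  obtain ⟨q, hq, hgq⟩ := key h2
  exact ⟨g, ⟨Or.inr ⟨x, y, rfl, p, hp, hgp⟩, Or.inr ⟨u, w, rfl, q, hq, hgq⟩⟩,
    p.edges_subset_edgeSet hgp⟩

theorem first_edge {V : Type*} {T : SimpleGraph V} (hT : T.IsTree) {x y : V} (hxy : x ≠ y) :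
    ∃ a, T.Adj x a ∧ (T.deleteEdges {s(x, a)}).Reachable a y ∧
      ¬ (T.deleteEdges {s(x, a)}).Reachable x a := by
  obtain ⟨p, hp⟩ := hT.connected.exists_isPath x y
  cases p with
  | nil => exact absurd rfl hxy
  | @cons _ a _ h q =>
    rw [Walk.cons_isPath_iff] at hp
    refine ⟨a, h, ⟨q.toDeleteEdges _ ?_⟩, ?_⟩
    · intro e he hm
      rw [Set.mem_singleton_iff] at hm
      subst hm
      exact hp.2 (q.fst_mem_support_of_mem_edges he)
    · exact isAcyclic_iff_forall_adj_isBridge.mp hT.isAcyclic h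

theorem adj_of_ne {V : Type*} {T : SimpleGraph V} {c d : V} {g : Sym2 V} (h : T.Adj c d)
    (hg : s(c, d) ≠ g) : (T.deleteEdges {g}).Reachable c d := by
  apply Adj.reachable
  simp [deleteEdges_adj, h, hg]

theorem lower_bound {V : Type*} [Fintype V] {T : SimpleGraph V} (hT : T.IsTree)
    {x y : V} (hxy : x ≠ y) (hn : ¬ T.Adj x y) :
    2 * (Fintype.card V - 3) ≤ cycleInterNum (⊤ : SimpleGraph V) T s(x, y) := by
  classical
  obtain ⟨a, ha, hay, hxa⟩ := first_edge hT hxy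
  obtain ⟨b, hb, hbx, hyb⟩ := first_edge hT hxy.symm
  have hay' : a ≠ y := by rintro rfl; exact hn ha
  have hbx' : b ≠ x := by rintro rfl; exact hn hb.symm
  have hax : a ≠ x := ha.ne'
  have hby : b ≠ y := hb.ne'
  have hg : s(x, a) ≠ s(y, b) := by
    simp only [ne_eq, Sym2.eq_iff]; grind
  -- separations of x and y
  have s1 : ¬ (T.deleteEdges {s(x, a)}).Reachable x y := fun h => hxa (h.trans hay.symm)
  have s2 : ¬ (T.deleteEdges {s(y, b)}).Reachable x y := fun h => hyb (h.symm.trans hbx.symm)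
  have r1 : (T.deleteEdges {s(x, a)}).Reachable y b := adj_of_ne hb hg.symm
  have r2 : (T.deleteEdges {s(y, b)}).Reachable x a := adj_of_ne ha hg
  set N : Set (Sym2 V) := {f | f ∈ (⊤ : SimpleGraph V).edgeSet \ T.edgeSet ∧ f ≠ s(x, y) ∧
    cyclesIntersect T s(x, y) f} with hN
  have m1 : ∀ u w, ¬ (T.deleteEdges {s(x, a)}).Reachable u w → s(u, w) ≠ s(x, a) →
      s(u, w) ≠ s(x, y) → s(u, w) ∈ N := by
    intro u w h h1 h2
    refine ⟨⟨?_, fun hh => h (adj_of_ne hh h1)⟩, h2, sep_intersect hT s1 h⟩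
    simp only [mem_edgeSet, top_adj]
    rintro rfl; exact h (Reachable.refl _)
  have m2 : ∀ u w, ¬ (T.deleteEdges {s(y, b)}).Reachable u w → s(u, w) ≠ s(y, b) →
      s(u, w) ≠ s(x, y) → s(u, w) ∈ N := by
    intro u w h h1 h2
    refine ⟨⟨?_, fun hh => h (adj_of_ne hh h1)⟩, h2, sep_intersect hT s2 h⟩
    simp only [mem_edgeSet, top_adj]
    rintro rfl; exact h (Reachable.refl _)
  set A : Finset V := Finset.univ \ {x, y, a} with hA
  have hAcard : A.card = Fintype.card V - 3 := by
    rw [hA, Finset.card_sdiff_of_subset (Finset.subset_univ _), Finset.card_univ,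
      Finset.card_eq_three.mpr ⟨x, y, a, hxy, hax.symm, hay'.symm, rfl⟩]
  have hex : ∀ u : V, ∃ F : Bool → Sym2 V, u ∈ A → F true ≠ F false ∧ ∀ i, F i ∈ N ∧
      ((∃ c, (c = x ∨ c = y ∨ c = a) ∧ F i = s(u, c)) ∨ (u = b ∧ F i = s(a, y))) := by
    intro u
    by_cases huA : u ∈ A
    swap
    · exact ⟨fun _ => s(x, y), fun h => absurd h huA⟩
    have hu : u ≠ x ∧ u ≠ y ∧ u ≠ a := by
      simpa [hA] using huA
    obtain ⟨hux, huy, hua⟩ := hu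
    suffices h : ∃ f1 f2 : Sym2 V, f1 ≠ f2 ∧ (f1 ∈ N ∧
      ((∃ c, (c = x ∨ c = y ∨ c = a) ∧ f1 = s(u, c)) ∨ (u = b ∧ f1 = s(a, y)))) ∧ (f2 ∈ N ∧
      ((∃ c, (c = x ∨ c = y ∨ c = a) ∧ f2 = s(u, c)) ∨ (u = b ∧ f2 = s(a, y)))) by
      obtain ⟨f1, f2, h0, h1, h2⟩ := h
      refine ⟨fun i => if i then f1 else f2, fun _ => ⟨by simpa using h0, ?_⟩⟩
      intro i
      cases i
      · simpa using h2
      · simpa using h1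
    by_cases hub : u = b
    · subst hub
      refine ⟨s(u, x), s(a, y), ?_, ⟨m1 _ _ (fun h => s1 (h.symm.trans r1.symm)) ?_ ?_,
        Or.inl ⟨x, by simp, rfl⟩⟩, ⟨m2 _ _ (fun h => s2 (r2.trans h)) ?_ ?_, Or.inr ⟨rfl, rfl⟩⟩⟩ <;>
      · simp only [ne_eq, Sym2.eq_iff]; grind
    · by_cases h0 : (T.deleteEdges {s(x, a)}).Reachable x u
      · refine ⟨s(u, y), s(u, a), ?_, ⟨m1 _ _ (fun h => s1 (h0.trans h)) ?_ ?_,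
          Or.inl ⟨y, by simp, rfl⟩⟩, ⟨m1 _ _ (fun h => hxa (h0.trans h)) ?_ ?_,
          Or.inl ⟨a, by simp, rfl⟩⟩⟩ <;>
        · simp only [ne_eq, Sym2.eq_iff]; grind
      · by_cases h1 : (T.deleteEdges {s(y, b)}).Reachable u y
        · refine ⟨s(u, x), s(u, a), ?_, ⟨m1 _ _ (fun h => h0 h.symm) ?_ ?_,
            Or.inl ⟨x, by simp, rfl⟩⟩, ⟨m2 _ _ (fun h => s2 (r2.trans (h.symm.trans h1))) ?_ ?_,
            Or.inl ⟨a, by simp, rfl⟩⟩⟩ <;>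
          · simp only [ne_eq, Sym2.eq_iff]; grind
        · refine ⟨s(u, x), s(u, y), ?_, ⟨m1 _ _ (fun h => h0 h.symm) ?_ ?_,
            Or.inl ⟨x, by simp, rfl⟩⟩, ⟨m2 _ _ h1 ?_ ?_,
            Or.inl ⟨y, by simp, rfl⟩⟩⟩ <;>
          · simp only [ne_eq, Sym2.eq_iff]; grind
  choose F hF using hex
  have hcard : (A ×ˢ (Finset.univ : Finset Bool)).card = 2 * (Fintype.card V - 3) := by
    rw [Finset.card_product, hAcard]; simp [mul_comm]
  have hinj : Set.InjOn (fun q : V × Bool => F q.1 q.2)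
      (A ×ˢ (Finset.univ : Finset Bool) : Finset (V × Bool)) := by
    rintro ⟨u, i⟩ hu ⟨w, j⟩ hw hij
    simp only [Finset.coe_product, Set.mem_prod, Finset.mem_coe, Finset.mem_univ,
      and_true] at hu hw hij
    have huw : u = w := by
      have hu' : u ≠ x ∧ u ≠ y ∧ u ≠ a := by simpa [hA] using hu
      have hw' : w ≠ x ∧ w ≠ y ∧ w ≠ a := by simpa [hA] using hw
      rcases ((hF u hu).2 i).2 with ⟨c, hc, h⟩ | ⟨h', h⟩ <;>
      rcases ((hF w hw).2 j).2 with ⟨d, hd, k⟩ | ⟨k', k⟩ <;>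
      rw [h, k, Sym2.eq_iff] at hij <;> grind
    subst huw
    have := (hF u hu).1
    cases i <;> cases j <;> simp_all
  unfold cycleInterNum
  rw [← hcard, ← Set.ncard_coe_finset, ← Set.InjOn.ncard_image hinj]
  apply Set.ncard_le_ncard _ (Set.toFinite _)
  rintro _ ⟨⟨u, i⟩, hu, rfl⟩
  simp only [Finset.coe_product, Set.mem_prod, Finset.mem_coe] at hu
  exact ((hF u hu.1).2 i).1

theorem star_cyc {V : Type*} {T : SimpleGraph V} {v : V} (hT : T.IsTree)
    (hs : ∀ u, u ≠ v → T.Adj v u) {e g : Sym2 V} (he : e ∈ (⊤ : SimpleGraph V).edgeSet \ T.edgeSet)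
    (hg : g ∈ cycEdges T e) (hgT : g ∈ T.edgeSet) : ∃ c, c ≠ v ∧ c ∈ e ∧ g = s(c, v) := by
  rcases hg with rfl | ⟨x, y, rfl, p, hp, hgp⟩
  · exact absurd hgT he.2
  have hxy : x ≠ y := by simpa using he.1
  have hnxy : ¬ T.Adj x y := he.2
  have hx : x ≠ v := by rintro rfl; exact hnxy (hs y hxy.symm)
  have hy : y ≠ v := by rintro rfl; exact hnxy (hs x hxy).symm
  let q : T.Walk x y := Walk.cons (hs x hx).symm (Walk.cons (hs y hy) Walk.nil)
  have hq : q.IsPath := by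
    simp [q, Walk.cons_isPath_iff, hxy, hx, hy.symm]
  have : p = q := congrArg Subtype.val (hT.isAcyclic.path_unique ⟨p, hp⟩ ⟨q, hq⟩)
  subst this
  simp only [q, Walk.edges_cons, Walk.edges_nil, List.mem_cons, List.not_mem_nil, or_false] at hgp
  rcases hgp with rfl | rfl
  · exact ⟨x, hx, by simp, rfl⟩
  · exact ⟨y, hy, by simp, Sym2.eq_swap⟩

theorem star_not_mem {V : Type*} {T : SimpleGraph V} {v : V}
    (hs : ∀ u, u ≠ v → T.Adj v u) {e : Sym2 V} (he : e ∈ (⊤ : SimpleGraph V).edgeSet \ T.edgeSet) :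
    v ∉ e := by
  intro hv
  obtain ⟨w, rfl⟩ := hv
  have hxy : v ≠ w := by simpa using he.1
  exact he.2 (hs w hxy.symm)

theorem upper_bound {V : Type*} [Fintype V] {T : SimpleGraph V} {v : V} (hT : T.IsTree)
    (hs : ∀ u, u ≠ v → T.Adj v u) {e : Sym2 V} (he : e ∈ (⊤ : SimpleGraph V).edgeSet \ T.edgeSet) :
    cycleInterNum (⊤ : SimpleGraph V) T e ≤ 2 * (Fintype.card V - 3) := by
  classical
  have hve := star_not_mem hs he
  induction e with | _ x y
  have hxy : x ≠ y := by simpa using he.1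
  have hx : v ≠ x := by rintro rfl; simp at hve
  have hy : v ≠ y := by rintro rfl; simp at hve
  set A : Finset V := Finset.univ \ {x, y, v} with hA
  have hAcard : A.card = Fintype.card V - 3 := by
    rw [hA, Finset.card_sdiff_of_subset (Finset.subset_univ _), Finset.card_univ,
      Finset.card_eq_three.mpr ⟨x, y, v, hxy, hx.symm, hy.symm, rfl⟩]
  have hsub : {f | f ∈ (⊤ : SimpleGraph V).edgeSet \ T.edgeSet ∧ f ≠ s(x, y) ∧
      cyclesIntersect T s(x, y) f} ⊆
      ((A.image (fun u => s(x, u)) ∪ A.image (fun u => s(y, u)) : Finset (Sym2 V)) :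
        Set (Sym2 V)) := by
    rintro f ⟨hf, hne, g, ⟨hg1, hg2⟩, hgT⟩
    obtain ⟨c, hc, hce, rfl⟩ := star_cyc hT hs he hg1 hgT
    obtain ⟨d, hd, hdf, hcd⟩ := star_cyc hT hs hf hg2 hgT
    have : c = d := by
      rw [Sym2.eq_iff] at hcd; grind
    subst this
    have hvf := star_not_mem hs hf
    obtain ⟨w, rfl⟩ := hdf
    have hcw : c ≠ w := by simpa using hf.1
    have hwv : w ≠ v := by rintro rfl; simp at hvf
    have hce' : c = x ∨ c = y := by simpa using hce
    rcases hce' with rfl | rfl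
    · have : w ≠ y := by rintro rfl; exact hne rfl
      simp only [Finset.coe_union, Finset.coe_image, Set.mem_union]
      exact Or.inl ⟨w, by simp [hA, hcw.symm, this, hwv], rfl⟩
    · have : w ≠ x := by rintro rfl; exact hne Sym2.eq_swap
      simp only [Finset.coe_union, Finset.coe_image, Set.mem_union]
      exact Or.inr ⟨w, by simp [hA, hcw.symm, this, hwv], rfl⟩
  unfold cycleInterNum
  refine (Set.ncard_le_ncard hsub (Finset.finite_toSet _)).trans ?_
  rw [Set.ncard_coe_finset]
  refine (Finset.card_union_le _ _).trans ?_
  have h1 := Finset.card_image_le (s := A) (f := fun u => s(x, u))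
  have h2 := Finset.card_image_le (s := A) (f := fun u => s(y, u))
  omega

theorem cyclesIntersect_symm {V : Type*} {T : SimpleGraph V} {e f : Sym2 V}
    (h : cyclesIntersect T e f) : cyclesIntersect T f e := by
  unfold cyclesIntersect at *
  rwa [Set.inter_comm (cycEdges T f)]

/-- The graph of intersecting tree-cycles. -/
def interGraph {V : Type*} (G T : SimpleGraph V) : SimpleGraph (Sym2 V) where
  Adj e f := e ≠ f ∧ e ∈ G.edgeSet \ T.edgeSet ∧ f ∈ G.edgeSet \ T.edgeSet ∧ cyclesIntersect T e f
  symm := ⟨fun _ _ h => ⟨h.1.symm, h.2.2.1, h.2.1, cyclesIntersect_symm h.2.2.2⟩⟩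
  loopless := ⟨fun _ h => h.1 rfl⟩

theorem double_count {V : Type*} [Fintype V] (G T : SimpleGraph V) [DecidableEq (Sym2 V)]
    [DecidablePred (· ∈ G.edgeSet \ T.edgeSet)] :
    2 * treeInterNum G T =
      ∑ e ∈ Finset.univ.filter (· ∈ G.edgeSet \ T.edgeSet), cycleInterNum G T e := by
  classical
  have h1 : treeInterNum G T = (interGraph G T).edgeFinset.card := by
    rw [← Set.ncard_coe_finset, coe_edgeFinset]
    unfold treeInterNum
    congr 1
    ext p
    constructor
    · rintro ⟨e, f, rfl, h⟩
      exact h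
    · induction p with | _ e f
      intro h
      exact ⟨e, f, rfl, h⟩
  rw [h1, ← sum_degrees_eq_twice_card_edges, Finset.sum_filter]
  refine Finset.sum_congr rfl fun e _ => ?_
  rw [← card_neighborFinset_eq_degree, ← Set.ncard_coe_finset, coe_neighborFinset]
  split_ifs with he
  · unfold cycleInterNum
    congr 1
    ext f
    simp only [mem_neighborSet, interGraph, Set.mem_setOf_eq]
    exact ⟨fun h => ⟨h.2.2.1, h.1.symm, h.2.2.2⟩, fun h => ⟨h.2.1.symm, he, h.1, h.2.2⟩⟩
  · rw [Set.ncard_eq_zero]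
    ext f
    simp only [mem_neighborSet, interGraph, Set.mem_empty_iff_false, iff_false]
    exact fun h => he h.2.1

theorem cycle_edge_count {V : Type*} [Fintype V] {T : SimpleGraph V} (hT : T.IsTree)
    [DecidablePred (· ∈ (⊤ : SimpleGraph V).edgeSet \ T.edgeSet)] :
    (Finset.univ.filter (· ∈ (⊤ : SimpleGraph V).edgeSet \ T.edgeSet)).card =
      (⊤ : SimpleGraph V).edgeSet.ncard - (Fintype.card V - 1) := by
  classical
  rw [← Set.ncard_coe_finset]
  have h := hT.card_edgeFinset
  rw [← Set.ncard_coe_finset, coe_edgeFinset] at h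
  have : (Finset.univ.filter (· ∈ (⊤ : SimpleGraph V).edgeSet \ T.edgeSet) : Set (Sym2 V)) =
    (⊤ : SimpleGraph V).edgeSet \ T.edgeSet := by ext; simp
  rw [this, Set.ncard_sdiff (edgeSet_mono le_top) (Set.toFinite _)]
  omega

/-- In the complete graph `K_n`, a star spanning tree `T_s` satisfies
`∩(T_s) ≤ ∩(T)` for every spanning tree `T`; star spanning trees minimize the tree
intersection number. -/
theorem stmt_8 {V : Type*} [Fintype V] (Ts T : SimpleGraph V) (v : V)
    (hTs : IsStarSpanningTree (⊤ : SimpleGraph V) Ts v)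
    (hle : T ≤ (⊤ : SimpleGraph V)) (hT : T.IsTree) :
    treeInterNum (⊤ : SimpleGraph V) Ts ≤ treeInterNum (⊤ : SimpleGraph V) T := by
  classical
  obtain ⟨-, hTsT, hs⟩ := hTs
  have h1 := double_count (⊤ : SimpleGraph V) Ts
  have h2 := double_count (⊤ : SimpleGraph V) T
  have u := Finset.sum_le_card_nsmul
    (Finset.univ.filter (· ∈ (⊤ : SimpleGraph V).edgeSet \ Ts.edgeSet))
    (cycleInterNum (⊤ : SimpleGraph V) Ts) (2 * (Fintype.card V - 3))
    (fun e he => upper_bound hTsT hs (Finset.mem_filter.mp he).2)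
  have l := Finset.card_nsmul_le_sum
    (Finset.univ.filter (· ∈ (⊤ : SimpleGraph V).edgeSet \ T.edgeSet))
    (cycleInterNum (⊤ : SimpleGraph V) T) (2 * (Fintype.card V - 3))
    (fun e he => by
      have he := (Finset.mem_filter.mp he).2
      induction e with | _ x y
      exact lower_bound hT (by simpa using he.1) he.2)
  rw [cycle_edge_count hTsT] at u
  rw [cycle_edge_count hT] at l
  have h3 : 2 * treeInterNum (⊤ : SimpleGraph V) Ts ≤ 2 * treeInterNum (⊤ : SimpleGraph V) T := by
    rw [h1, h2]
    exact u.trans l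
  omega
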